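/- Assume f satisfies (f_reg), (f_eq), (f_0) and (f_subc) with constant η ∈ (0,1), and let R1 = 0. There exist constants K1 > 0, K2 ≥ 0 and d̄ > 1/η such that for every d ≥ d̄, every solution u of the Cauchy problem with datum d on [0,R2] satisfies R2^N · H(r) + (N/p*) · R2^{N-1} · ( |u(r)|^p/p + |u'(r)|^p/p' ) ≥ K1 · f*(d) · d · r0^N − K2 for every r ∈ [r0, R2], where N/p* := 0 if p* = +∞. -/

import Mathlib

open Real Set Filter Topology

noncomputable def phip (p s : ℝ) : ℝ := |s| ^ (p - 2) * s

def Freg (f : ℝ → ℝ) : Prop :=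
  ContinuousOn f (Ici 0) ∧ ContDiffOn ℝ 1 f (Ioi 0)

def Feq (f : ℝ → ℝ) : Prop :=
  f 0 = 0 ∧ f 1 = 0 ∧ (∀ s : ℝ, 0 < s → s < 1 → f s < 0) ∧ (∀ s : ℝ, 1 < s → 0 < f s)

def Fzero (p : ℝ) (f : ℝ → ℝ) : Prop :=
  ∃ c : ℝ, ∀ᶠ s in 𝓝[>] (0:ℝ), c ≤ f s / s ^ (p - 1)

noncomputable def pstar (p : ℝ) (N : ℕ) : EReal :=
  if p < (N:ℝ) then (((N:ℝ) * p / ((N:ℝ) - p) : ℝ) : EReal) else ⊤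

noncomputable def fstar (f : ℝ → ℝ) (s : ℝ) : ℝ := sSup (f '' Icc 1 s)

noncomputable def Fint (f : ℝ → ℝ) (s : ℝ) : ℝ := ∫ σ in (1:ℝ)..s, f σ

def Fsubl (p : ℝ) (f : ℝ → ℝ) : Prop :=
  ∃ M : ℝ, 0 < M ∧ ∀ ε > 0, ∀ᶠ s in atTop, f s / s ^ (p - 1) ≤ M + ε

def FsubcWith (p : ℝ) (N : ℕ) (f : ℝ → ℝ) (η : ℝ) : Prop :=
  (∀ c : ℝ, ∃ᶠ s in atTop, c < f s / s ^ (p - 1)) ∧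
  0 < η ∧ η < 1 ∧
  ∃ L : ℝ, (L : EReal) < pstar p N ∧
    ∀ᶠ s in atTop, fstar f s * s / Fint f (η * s) ≤ L

def Fsubc (p : ℝ) (N : ℕ) (f : ℝ → ℝ) : Prop := ∃ η : ℝ, FsubcWith p N f η

/-- A radial solution of the Neumann problem on `[R1,R2]`. -/
def NeumannSol (p : ℝ) (N : ℕ) (R1 R2 : ℝ) (f u : ℝ → ℝ) : Prop :=
  (∀ x ∈ Icc R1 R2, DifferentiableAt ℝ u x) ∧
  ContinuousOn (deriv u) (Icc R1 R2) ∧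
  (∀ x ∈ Icc R1 R2, 0 < u x) ∧
  deriv u R1 = 0 ∧ deriv u R2 = 0 ∧
  ContinuousOn (fun x => x ^ (N - 1) * phip p (deriv u x)) (Icc R1 R2) ∧
  ∀ x ∈ Ioc R1 R2,
    HasDerivAt (fun t => t ^ (N - 1) * phip p (deriv u t)) (-(x ^ (N - 1)) * f (u x)) x

noncomputable def fhat (f : ℝ → ℝ) (s : ℝ) : ℝ := if 0 ≤ s then f s else 0

noncomputable def Fhat (f : ℝ → ℝ) (s : ℝ) : ℝ := ∫ σ in (1:ℝ)..s, fhat f σ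

/-- A solution of the Cauchy problem with datum `d`, for the nonlinearity `g`. -/
def CauchySol (p : ℝ) (N : ℕ) (R1 R2 : ℝ) (g u : ℝ → ℝ) (d : ℝ) : Prop :=
  (∀ x ∈ Icc R1 R2, DifferentiableAt ℝ u x) ∧
  ContinuousOn (deriv u) (Icc R1 R2) ∧
  u R1 = d ∧ deriv u R1 = 0 ∧
  ContinuousOn (fun x => x ^ (N - 1) * phip p (deriv u x)) (Icc R1 R2) ∧
  ∀ x ∈ Ioc R1 R2,
    HasDerivAt (fun t => t ^ (N - 1) * phip p (deriv u t)) (-(x ^ (N - 1)) * g (u x)) x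

noncomputable def rOne (R1 R2 : ℝ) (u : ℝ → ℝ) : ℝ :=
  sSup {x | x ∈ Icc R1 R2 ∧ ∀ s ∈ Ico R1 x, 0 < u s}

noncomputable def rZero (R2 η d : ℝ) (u : ℝ → ℝ) : ℝ :=
  sSup {x | x ∈ Icc 0 R2 ∧ ∀ s ∈ Ico 0 x, η * d < u s}

noncomputable def energy (p : ℝ) (f u : ℝ → ℝ) (x : ℝ) : ℝ :=
  |deriv u x| ^ p / (p / (p - 1)) + Fhat f (u x)

def NonConstOn (R1 R2 : ℝ) (u : ℝ → ℝ) : Prop :=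
  ∃ x ∈ Icc R1 R2, ∃ x' ∈ Icc R1 R2, u x ≠ u x'

def DistinctOn (R1 R2 : ℝ) (u v : ℝ → ℝ) : Prop :=
  ∃ x ∈ Icc R1 R2, u x ≠ v x

noncomputable def nOverPstar (p : ℝ) (N : ℕ) : ℝ :=
  if p < (N:ℝ) then ((N:ℝ) - p) / p else 0

theorem abs_phip {p : ℝ} (hp : 1 < p) (s : ℝ) : |phip p s| = |s| ^ (p - 1) := by
  rcases eq_or_ne s 0 with rfl | hs
  · simp [phip, Real.zero_rpow (by linarith : p - 1 ≠ 0)]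
  · have h : p - 1 = p - 2 + 1 := by ring
    rw [phip, abs_mul, abs_of_nonneg (by positivity : 0 ≤ |s| ^ (p - 2)), h,
      Real.rpow_add_one (abs_pos.2 hs).ne']

theorem abs_phip_rpow {p : ℝ} (hp : 1 < p) (s : ℝ) : |phip p s| ^ (p / (p - 1)) = |s| ^ p := by
  rw [abs_phip hp, ← Real.rpow_mul (abs_nonneg s), mul_div_cancel₀ _ (by linarith : p - 1 ≠ 0)]

theorem phip_mul_self {p : ℝ} (hp : 1 < p) (s : ℝ) : phip p s * s = |s| ^ p := by
  rcases eq_or_ne s 0 with rfl | hs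
  · simp [Real.zero_rpow (by linarith : p ≠ 0)]
  · have h : p = p - 2 + 2 := by ring
    conv_rhs => rw [h, Real.rpow_add (abs_pos.2 hs), Real.rpow_two, sq_abs]
    rw [phip]
    ring

theorem phip_conj_phip {p : ℝ} (hp : 1 < p) (s : ℝ) : phip (p / (p - 1)) (phip p s) = s := by
  rcases eq_or_ne s 0 with rfl | hs
  · simp [phip]
  · have hp' : p - 1 ≠ 0 := by linarith
    rw [phip, abs_phip hp, phip, ← Real.rpow_mul (abs_nonneg s), ← mul_assoc,
      ← Real.rpow_add (abs_pos.2 hs)]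
    have h : (p - 1) * (p / (p - 1) - 2) + (p - 2) = 0 := by
      field_simp
      ring
    rw [h, Real.rpow_zero, one_mul]

theorem nonpos_of_phip_nonpos {p s : ℝ} (h : phip p s ≤ 0) : s ≤ 0 := by
  by_contra! hs
  have : 0 < phip p s := mul_pos (Real.rpow_pos_of_pos (abs_pos.2 hs.ne') _) hs
  linarith

theorem mul_phip_le {p : ℝ} (hp : 1 < p) (a s : ℝ) :
    a * phip p s ≤ |a| ^ p / p + |s| ^ p / (p / (p - 1)) := by
  have := Real.young_inequality a (phip p s) (Real.HolderConjugate.conjExponent hp)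
  rwa [Real.conjExponent, abs_phip_rpow hp] at this

theorem continuous_fhat {f : ℝ → ℝ} (hreg : Freg f) (heq : Feq f) : Continuous (fhat f) := by
  have h : fhat f = fun s => f (max s 0) := by
    funext s
    rcases le_or_gt 0 s with hs | hs
    · simp [fhat, hs]
    · simp [fhat, hs.not_ge, hs.le, heq.1]
  rw [h]
  exact hreg.1.comp_continuous (by fun_prop) fun s => le_max_right s 0

theorem fhat_nonneg {f : ℝ → ℝ} (heq : Feq f) {s : ℝ} (hs : 1 ≤ s) : 0 ≤ fhat f s := by
  rw [fhat, if_pos (by linarith)]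
  rcases hs.eq_or_lt with rfl | h
  · exact heq.2.1.ge
  · exact (heq.2.2.2 s h).le

theorem fhat_nonpos {f : ℝ → ℝ} (heq : Feq f) {s : ℝ} (hs : s ≤ 1) : fhat f s ≤ 0 := by
  rcases lt_trichotomy s 0 with h | rfl | h
  · simp [fhat, h.not_ge]
  · simp [fhat, heq.1]
  · rw [fhat, if_pos h.le]
    rcases hs.eq_or_lt with rfl | h1
    · exact heq.2.1.le
    · exact (heq.2.2.1 s h h1).le

theorem hasDerivAt_Fhat {f : ℝ → ℝ} (hc : Continuous (fhat f)) (s : ℝ) :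
    HasDerivAt (Fhat f) (fhat f s) s :=
  intervalIntegral.integral_hasDerivAt_right (hc.intervalIntegrable _ _)
    hc.stronglyMeasurable.stronglyMeasurableAtFilter hc.continuousAt

theorem continuous_Fhat {f : ℝ → ℝ} (hc : Continuous (fhat f)) : Continuous (Fhat f) :=
  continuous_iff_continuousAt.2 fun s => (hasDerivAt_Fhat hc s).continuousAt

theorem Fhat_eq_Fint {f : ℝ → ℝ} {s : ℝ} (hs : 0 ≤ s) : Fhat f s = Fint f s := by
  refine intervalIntegral.integral_congr fun σ hσ => ?_
  have : 0 ≤ σ := (le_min zero_le_one hs).trans hσ.1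
  simp [fhat, this]

theorem monotoneOn_Fhat {f : ℝ → ℝ} (hc : Continuous (fhat f)) (heq : Feq f) :
    MonotoneOn (Fhat f) (Ici 1) := by
  refine monotoneOn_of_deriv_nonneg (convex_Ici 1) (continuous_Fhat hc).continuousOn
    (fun s _ => (hasDerivAt_Fhat hc s).differentiableAt.differentiableWithinAt) fun s hs => ?_
  rw [(hasDerivAt_Fhat hc s).deriv]
  exact fhat_nonneg heq (interior_subset hs)

theorem Fhat_nonneg {f : ℝ → ℝ} (hc : Continuous (fhat f)) (heq : Feq f) (s : ℝ) :
    0 ≤ Fhat f s := by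
  have h1 : Fhat f 1 = 0 := intervalIntegral.integral_same
  rw [← h1]
  rcases le_total 1 s with hs | hs
  · exact monotoneOn_Fhat hc heq self_mem_Ici hs hs
  · have hanti : AntitoneOn (Fhat f) (Iic 1) := by
      refine antitoneOn_of_deriv_nonpos (convex_Iic 1) (continuous_Fhat hc).continuousOn
        (fun s _ => (hasDerivAt_Fhat hc s).differentiableAt.differentiableWithinAt) fun s hs => ?_
      rw [(hasDerivAt_Fhat hc s).deriv]
      exact fhat_nonpos heq (mem_Iic.1 (interior_subset hs))
    exact hanti hs self_mem_Iic hs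

theorem fhat_le_fstar {f : ℝ → ℝ} (hreg : Freg f) {s d : ℝ} (h1 : 1 ≤ s) (hs : s ≤ d) :
    fhat f s ≤ fstar f d := by
  rw [fhat, if_pos (by linarith)]
  refine le_csSup (isCompact_Icc.bddAbove_image (hreg.1.mono fun x hx => ?_)) ⟨s, ⟨h1, hs⟩, rfl⟩
  exact zero_le_one.trans hx.1

theorem fstar_pos {f : ℝ → ℝ} (hreg : Freg f) (heq : Feq f) {d : ℝ} (hd : 1 < d) :
    0 < fstar f d := by
  refine lt_of_lt_of_le ?_ (fhat_le_fstar hreg hd.le le_rfl)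
  rw [fhat, if_pos (by linarith)]
  exact heq.2.2.2 d hd

theorem nOverPstar_nonneg {p : ℝ} (hp : 1 < p) (N : ℕ) : 0 ≤ nOverPstar p N := by
  unfold nOverPstar
  split_ifs with h
  · exact div_nonneg (by linarith) (by linarith)
  · exact le_rfl

theorem nOverPstar_ge {p : ℝ} (hp : 1 < p) (N : ℕ) : (N - p) / p ≤ nOverPstar p N := by
  unfold nOverPstar
  split_ifs with h
  · exact le_rfl
  · exact div_nonpos_of_nonpos_of_nonneg (by linarith) (by linarith)

theorem nOverPstar_mul_lt {p : ℝ} (hp : 1 < p) {N : ℕ} (hN : 1 ≤ N) {L : ℝ}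
    (hL : (L : EReal) < pstar p N) : nOverPstar p N * L < N := by
  have hN' : (1 : ℝ) ≤ N := by exact_mod_cast hN
  unfold nOverPstar
  unfold pstar at hL
  split_ifs at hL ⊢ with h
  · have hL' := EReal.coe_lt_coe_iff.1 hL
    rw [lt_div_iff₀ (by linarith)] at hL'
    rw [div_mul_eq_mul_div, div_lt_iff₀ (by linarith)]
    linarith
  · linarith

theorem mul_pow_sub_le_of_deriv_ge {P : ℝ → ℝ} {a b c : ℝ} {N : ℕ} (hab : a ≤ b)
    (hP : ContinuousOn P (Icc a b))
    (hP' : ∀ x ∈ Ioo a b, ∃ D, HasDerivAt P D x ∧ c * (N * x ^ (N - 1)) ≤ D) :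
    c * (b ^ N - a ^ N) ≤ P b - P a := by
  have hmono : MonotoneOn (fun x => P x - c * x ^ N) (Icc a b) := by
    have hd : ∀ x ∈ Ioo a b, ∃ D, HasDerivAt (fun x => P x - c * x ^ N) D x ∧ 0 ≤ D := by
      intro x hx
      obtain ⟨D, hD, hle⟩ := hP' x hx
      exact ⟨_, hD.sub ((hasDerivAt_pow N x).const_mul c), sub_nonneg.2 hle⟩
    refine monotoneOn_of_deriv_nonneg (convex_Icc a b) (hP.sub (by fun_prop)) ?_ ?_ <;>
      rw [interior_Icc] <;> intro x hx <;> obtain ⟨D, hD, h0⟩ := hd x hx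
    · exact hD.differentiableAt.differentiableWithinAt
    · rwa [hD.deriv]
  have := hmono (left_mem_Icc.2 hab) (right_mem_Icc.2 hab) hab
  simp only at this
  linarith

/-- The kinetic energy is differentiable where `r ≠ 0`, even though `u'` need not be. -/
theorem hasDerivAt_kinetic {p : ℝ} (hp : 1 < p) {n : ℕ} {w : ℝ → ℝ} {x g : ℝ} (hx : 0 < x)
    (h : HasDerivAt (fun t => t ^ n * phip p (w t)) (-(x ^ n) * g) x) :
    HasDerivAt (fun t => |w t| ^ p / (p / (p - 1))) (-(n / x * |w x| ^ p) - g * w x) x := by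
  have hp1 : 0 < p - 1 := by linarith
  have hq : 1 < p / (p - 1) := by rw [lt_div_iff₀ hp1]; linarith
  have hxn : x ^ n ≠ 0 := (pow_pos hx n).ne'
  have hy : HasDerivAt (fun t => phip p (w t)) (-g - n / x * phip p (w x)) x := by
    refine ((h.div (hasDerivAt_pow n x) hxn).congr_of_eventuallyEq ?_).congr_deriv ?_
    · filter_upwards [lt_mem_nhds hx] with t ht
      have : t ^ n ≠ 0 := (pow_pos ht n).ne'
      simp only [Pi.div_apply]
      field_simp
    · rcases n with _ | n
      · simp
      · simp only [Nat.add_sub_cancel]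
        field_simp
        ring
  have hk := ((hasDerivAt_abs_rpow (phip p (w x)) hq).comp x hy).div_const (p / (p - 1))
  refine (hk.congr_of_eventuallyEq ?_).congr_deriv ?_
  · filter_upwards with t
    simp only [Function.comp, abs_phip_rpow hp]
  · have hc : |phip p (w x)| ^ (p / (p - 1) - 2) * phip p (w x) = w x := phip_conj_phip hp (w x)
    have hq0 : p / (p - 1) ≠ 0 := by positivity
    rw [mul_assoc (p / (p - 1)), hc, ← phip_mul_self hp]
    generalize p / (p - 1) = q at hq0 ⊢
    field_simp
    ring

/-- The quantity whose derivative is given by the Pohozaev identity. -/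
noncomputable def pohozaev (p : ℝ) (N : ℕ) (f u : ℝ → ℝ) (x : ℝ) : ℝ :=
  x ^ N * energy p f u x + nOverPstar p N * (u x * (x ^ (N - 1) * phip p (deriv u x)))

theorem continuousOn_pohozaev {p : ℝ} (hp : 1 < p) {N : ℕ} {R2 d : ℝ} {f u : ℝ → ℝ}
    (hc : Continuous (fhat f)) (hu : CauchySol p N 0 R2 (fhat f) u d) :
    ContinuousOn (pohozaev p N f u) (Icc 0 R2) := by
  obtain ⟨hd, hdc, -, -, hv, -⟩ := hu
  have huc : ContinuousOn u (Icc 0 R2) := fun x hx => (hd x hx).continuousAt.continuousWithinAt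
  have hE : ContinuousOn (energy p f u) (Icc 0 R2) :=
    ((hdc.abs.rpow_const fun x _ => Or.inr (by linarith)).div_const _).add
      ((continuous_Fhat hc).comp_continuousOn huc)
  exact ((continuousOn_id.pow N).mul hE).add (continuousOn_const.mul (huc.mul hv))

theorem exists_hasDerivAt_pohozaev {p : ℝ} (hp : 1 < p) {N : ℕ} (hN : 1 ≤ N) {R2 d : ℝ}
    {f u : ℝ → ℝ} (hc : Continuous (fhat f)) (hu : CauchySol p N 0 R2 (fhat f) u d) {x : ℝ}
    (hx : x ∈ Ioo 0 R2) :
    ∃ D, HasDerivAt (pohozaev p N f u) D x ∧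
      x ^ (N - 1) * (N * Fhat f (u x) - nOverPstar p N * (fhat f (u x) * u x)) ≤ D := by
  obtain ⟨hd, -, -, -, -, hv'⟩ := hu
  obtain ⟨n, rfl⟩ := Nat.exists_eq_add_of_le' hN
  have hv := hv' x ⟨hx.1, hx.2.le⟩
  simp only [Nat.add_sub_cancel] at hv
  have hud : HasDerivAt u (deriv u x) x := (hd x ⟨hx.1.le, hx.2.le⟩).hasDerivAt
  have hE : HasDerivAt (energy p f u) _ x :=
    (hasDerivAt_kinetic hp hx.1 hv).add ((hasDerivAt_Fhat hc (u x)).comp x hud)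
  refine ⟨_, ((hasDerivAt_pow (n + 1) x).mul hE).add
    ((hud.mul hv).const_mul (nOverPstar p (n + 1))), ?_⟩
  have ha := nOverPstar_ge hp (n + 1)
  have hW : 0 ≤ x ^ n * |deriv u x| ^ p :=
    mul_nonneg (pow_pos hx.1 n).le (Real.rpow_nonneg (abs_nonneg _) _)
  have hs := phip_mul_self hp (deriv u x)
  simp only [Nat.add_sub_cancel, energy]
  generalize nOverPstar p (n + 1) = a at *
  generalize phip p (deriv u x) = y at *
  generalize |deriv u x| ^ p = W at *
  push_cast at ha ⊢
  have key : 0 ≤ (x ^ n * W) * (a - (n + 1 - p) / p) := mul_nonneg hW (by linarith)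
  refine le_of_sub_nonneg (key.trans_eq ?_)
  have hx0 : x ≠ 0 := hx.1.ne'
  have hp1 : p - 1 ≠ 0 := by linarith
  rw [← hs]
  field_simp
  ring

theorem le_datum_of_gt_one {p : ℝ} {N : ℕ} {R2 d r : ℝ} {f u : ℝ → ℝ} (heq : Feq f)
    (hu : CauchySol p N 0 R2 (fhat f) u d) (hr : r ≤ R2) (h1 : ∀ s ∈ Ico 0 r, 1 < u s) :
    ∀ s ∈ Ico 0 r, u s ≤ d := by
  obtain ⟨hd, -, hu0, hdu0, hv, hv'⟩ := hu
  have hvanti : AntitoneOn (fun x => x ^ (N - 1) * phip p (deriv u x)) (Icc 0 r) := by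
    have hder : ∀ x ∈ Ioo 0 r, HasDerivAt (fun x => x ^ (N - 1) * phip p (deriv u x))
        (-(x ^ (N - 1)) * fhat f (u x)) x := fun x hx => hv' x ⟨hx.1, hx.2.le.trans hr⟩
    refine antitoneOn_of_deriv_nonpos (convex_Icc 0 r) (hv.mono (Icc_subset_Icc_right hr)) ?_ ?_ <;>
      rw [interior_Icc] <;> intro x hx
    · exact (hder x hx).differentiableAt.differentiableWithinAt
    · rw [(hder x hx).deriv]
      have := mul_nonneg (pow_pos hx.1 (N - 1)).le (fhat_nonneg heq (h1 x ⟨hx.1.le, hx.2⟩).le)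
      linarith
  have huanti : AntitoneOn u (Icc 0 r) := by
    have hdiff : ∀ x ∈ Icc 0 r, DifferentiableAt ℝ u x := fun x hx => hd x ⟨hx.1, hx.2.trans hr⟩
    refine antitoneOn_of_deriv_nonpos (convex_Icc 0 r)
      (fun x hx => (hdiff x hx).continuousAt.continuousWithinAt)
      (fun x hx => (hdiff x (interior_subset hx)).differentiableWithinAt) ?_
    rw [interior_Icc]
    intro x hx
    have hle := hvanti ⟨le_rfl, hx.1.le.trans hx.2.le⟩ ⟨hx.1.le, hx.2.le⟩ hx.1.le
    simp only [hdu0] at hle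
    refine nonpos_of_phip_nonpos (p := p) (nonpos_of_mul_nonpos_right (hle.trans ?_)
      (pow_pos hx.1 (N - 1)))
    simp [phip]
  intro s hs
  rw [← hu0]
  exact huanti ⟨le_rfl, hs.1.trans hs.2.le⟩ ⟨hs.1, hs.2.le⟩ hs.1

theorem rZero_mem {R2 η d : ℝ} (hR2 : 0 ≤ R2) (u : ℝ → ℝ) : rZero R2 η d u ∈ Icc 0 R2 :=
  ⟨Real.sSup_nonneg fun _ hx => hx.1.1, csSup_le ⟨0, ⟨le_rfl, hR2⟩, by simp⟩ fun _ hx => hx.1.2⟩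

theorem lt_of_lt_rZero {R2 η d : ℝ} (hR2 : 0 ≤ R2) {u : ℝ → ℝ} :
    ∀ s ∈ Ico 0 (rZero R2 η d u), η * d < u s := by
  intro s hs
  obtain ⟨x, hx, hsx⟩ := exists_lt_of_lt_csSup
    (show {x | x ∈ Icc 0 R2 ∧ ∀ s ∈ Ico 0 x, η * d < u s}.Nonempty from
      ⟨0, ⟨le_rfl, hR2⟩, by simp⟩) hs.2
  exact hx.2 s ⟨hs.1, hsx⟩

/-- Subcriticality in a form valid for all large arguments, written without division. -/
theorem FsubcWith.exists_bound {p : ℝ} (hp : 1 < p) {N : ℕ} (hN : 1 ≤ N) {f : ℝ → ℝ} {η : ℝ}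
    (hreg : Freg f) (heq : Feq f) (hsubc : FsubcWith p N f η) :
    ∃ K1 > 0, ∃ S > 1 / η, ∀ s ≥ S,
      nOverPstar p N * (fstar f s * s) + N * K1 * (fstar f s * s) ≤ N * Fhat f (η * s) := by
  obtain ⟨-, hη0, hη1, L, hL, hev⟩ := hsubc
  obtain ⟨T, hT⟩ := eventually_atTop.1 hev
  have hN' : (0 : ℝ) < N := by exact_mod_cast hN
  have hη : 1 < 1 / η := by rwa [lt_div_iff₀ hη0, one_mul]
  have hc := continuous_fhat hreg heq
  have hlarge : ∀ s ≥ max T (1 / η + 1), 0 < fstar f s * s ∧ fstar f s * s ≤ L * Fhat f (η * s) ∧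
      0 < Fhat f (η * s) := by
    intro s hs
    have hs1 : 1 / η + 1 ≤ s := (le_max_right _ _).trans hs
    have hηs : 1 < η * s := by
      have : 1 / η < s := by linarith
      rw [div_lt_iff₀ hη0] at this
      linarith
    have hpos : 0 < Fhat f (η * s) :=
      intervalIntegral.intervalIntegral_pos_of_pos_on (hc.intervalIntegrable _ _)
        (fun x hx => by
          rw [fhat, if_pos (by linarith [hx.1])]
          exact heq.2.2.2 x hx.1) hηs
    have hr := hT s ((le_max_left _ _).trans hs)
    rw [← Fhat_eq_Fint (by linarith), div_le_iff₀ hpos] at hr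
    exact ⟨mul_pos (fstar_pos hreg heq (by linarith)) (by linarith), hr, hpos⟩
  have hL0 : 0 < L := by
    obtain ⟨h1, h2, h3⟩ := hlarge _ le_rfl
    exact pos_of_mul_pos_left (h1.trans_le h2) h3.le
  have ha := nOverPstar_mul_lt hp hN hL
  refine ⟨(N - nOverPstar p N * L) / (N * L), div_pos (by linarith) (by positivity),
    max T (1 / η + 1), lt_max_of_lt_right (by linarith), fun s hs => ?_⟩
  obtain ⟨-, h2, -⟩ := hlarge s hs
  have h4 : nOverPstar p N * (fstar f s * s) +
      N * ((N - nOverPstar p N * L) / (N * L)) * (fstar f s * s) = N * (fstar f s * s / L) := by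
    field_simp
    ring
  rw [h4]
  refine mul_le_mul_of_nonneg_left ?_ hN'.le
  rwa [div_le_iff₀' hL0]

theorem exists_pohozaev_density_ge {p : ℝ} (hp : 1 < p) {N : ℕ} {f : ℝ → ℝ} {η S K1 : ℝ}
    (hreg : Freg f) (heq : Feq f) (hη0 : 0 < η) (hη1 : η < 1) (hS : 1 / η < S) (hK1 : 0 < K1)
    (h : ∀ s ≥ S, nOverPstar p N * (fstar f s * s) + N * K1 * (fstar f s * s)
      ≤ N * Fhat f (η * s)) :
    ∃ K ≥ 0, ∀ s, -K ≤ N * Fhat f s - nOverPstar p N * (fhat f s * s) := by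
  have hc := continuous_fhat hreg heq
  have hη : 1 < 1 / η := by rwa [lt_div_iff₀ hη0, one_mul]
  have ha := nOverPstar_nonneg hp N
  obtain ⟨m, hm⟩ := (isCompact_Icc (a := (0 : ℝ)) (b := S)).bddBelow_image
    (f := fun s => N * Fhat f s - nOverPstar p N * (fhat f s * s))
    ((continuous_const.mul (continuous_Fhat hc)).sub
      (continuous_const.mul (hc.mul continuous_id))).continuousOn
  refine ⟨|m|, abs_nonneg m, fun s => ?_⟩
  rcases lt_or_ge s 0 with hs | hs
  · have h1 : fhat f s = 0 := by simp [fhat, hs.not_ge]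
    have h2 : 0 ≤ N * Fhat f s := mul_nonneg N.cast_nonneg (Fhat_nonneg hc heq s)
    rw [h1]
    linarith [abs_nonneg m]
  rcases le_total s S with hsS | hsS
  · exact (neg_abs_le m).trans (hm ⟨s, ⟨hs, hsS⟩, rfl⟩)
  · have hs1 : 1 < s := by linarith
    have hηs : 1 ≤ η * s := by
      have h3 : 1 / η < s := by linarith
      rw [div_lt_iff₀ hη0] at h3
      linarith
    have h4 : Fhat f (η * s) ≤ Fhat f s :=
      monotoneOn_Fhat hc heq hηs hs1.le (by nlinarith)
    have h5 : fhat f s * s ≤ fstar f s * s :=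
      mul_le_mul_of_nonneg_right (fhat_le_fstar hreg hs1.le le_rfl) hs
    have h6 : 0 ≤ N * K1 * (fstar f s * s) := by
      have := fstar_pos hreg heq hs1
      positivity
    have h7 := mul_le_mul_of_nonneg_left h4 (Nat.cast_nonneg (α := ℝ) N)
    have h8 := mul_le_mul_of_nonneg_left h5 ha
    linarith [h s hsS, abs_nonneg m]

theorem stmt17 (p : ℝ) (hp : 1 < p) (N : ℕ) (hN : 1 ≤ N)
    (R2 : ℝ) (hR2 : 0 < R2)
    (f : ℝ → ℝ) (hreg : Freg f) (heq : Feq f) (h0 : Fzero p f)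
    (η : ℝ) (hsubc : FsubcWith p N f η) :
    ∃ K1 : ℝ, 0 < K1 ∧ ∃ K2 : ℝ, 0 ≤ K2 ∧ ∃ dbar : ℝ, 1 / η < dbar ∧
      ∀ d : ℝ, dbar ≤ d → ∀ u : ℝ → ℝ, CauchySol p N 0 R2 (fhat f) u d →
        ∀ x ∈ Icc (rZero R2 η d u) R2,
          K1 * fstar f d * d * (rZero R2 η d u) ^ N - K2 ≤
            R2 ^ N * energy p f u x +
              nOverPstar p N * R2 ^ (N - 1) *
                (|u x| ^ p / p + |deriv u x| ^ p / (p / (p - 1))) := by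
  have hN0 : (0 : ℝ) < N := by exact_mod_cast hN
  have hc := continuous_fhat hreg heq
  have ha := nOverPstar_nonneg hp N
  obtain ⟨K1, hK1, S, hS, hbound⟩ := hsubc.exists_bound hp hN hreg heq
  obtain ⟨-, hη0, hη1, -⟩ := hsubc
  obtain ⟨K, hK0, hK⟩ := exists_pohozaev_density_ge hp hreg heq hη0 hη1 hS hK1 hbound
  refine ⟨K1, hK1, K / N * R2 ^ N, by positivity, S, hS, fun d hd u hu x hx => ?_⟩
  have hηd : 1 < η * d := by
    have h := hS.trans_le hd
    rw [div_lt_iff₀ hη0] at h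
    linarith
  obtain ⟨hr0, hrR⟩ := rZero_mem (η := η) (d := d) hR2.le u
  have hru := lt_of_lt_rZero (η := η) (d := d) hR2.le (u := u)
  set r := rZero R2 η d u
  have hud := le_datum_of_gt_one heq hu hrR fun s hs => hηd.trans (hru s hs)
  have hP := continuousOn_pohozaev hp hc hu
  have hP0 : pohozaev p N f u 0 = 0 := by
    have : N ≠ 0 := by omega
    simp [pohozaev, hu.2.2.2.1, phip, this]
  have hstep1 : K1 * fstar f d * d * (r ^ N - 0 ^ N) ≤ pohozaev p N f u r - pohozaev p N f u 0 := by
    refine mul_pow_sub_le_of_deriv_ge hr0 (hP.mono (Icc_subset_Icc_right hrR)) fun t ht => ?_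
    obtain ⟨D, hD, hle⟩ := exists_hasDerivAt_pohozaev hp hN hc hu ⟨ht.1, ht.2.trans_le hrR⟩
    refine ⟨D, hD, le_trans ?_ hle⟩
    have h1 := hru t ⟨ht.1.le, ht.2⟩
    have h2 := hud t ⟨ht.1.le, ht.2⟩
    have h3 : Fhat f (η * d) ≤ Fhat f (u t) :=
      monotoneOn_Fhat hc heq hηd.le (hηd.trans h1).le h1.le
    have h4 : fhat f (u t) * u t ≤ fstar f d * d :=
      mul_le_mul (fhat_le_fstar hreg (hηd.trans h1).le h2) h2 (by linarith)
        (fstar_pos hreg heq ((hηd.trans h1).trans_le h2)).le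
    have h5 := mul_le_mul_of_nonneg_left h3 hN0.le
    have h6 := mul_le_mul_of_nonneg_left h4 ha
    have h7 : N * K1 * (fstar f d * d) ≤
        N * Fhat f (u t) - nOverPstar p N * (fhat f (u t) * u t) := by
      linarith [hbound d hd]
    calc K1 * fstar f d * d * (N * t ^ (N - 1)) = t ^ (N - 1) * (N * K1 * (fstar f d * d)) := by
          ring
      _ ≤ _ := mul_le_mul_of_nonneg_left h7 (pow_pos ht.1 _).le
  have hstep2 : -(K / N) * (x ^ N - r ^ N) ≤ pohozaev p N f u x - pohozaev p N f u r := by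
    refine mul_pow_sub_le_of_deriv_ge hx.1 (hP.mono (Icc_subset_Icc hr0 hx.2)) fun t ht => ?_
    have ht0 : 0 < t := hr0.trans_lt ht.1
    obtain ⟨D, hD, hle⟩ := exists_hasDerivAt_pohozaev hp hN hc hu ⟨ht0, ht.2.trans_le hx.2⟩
    refine ⟨D, hD, le_trans ?_ hle⟩
    calc -(K / N) * (N * t ^ (N - 1)) = t ^ (N - 1) * -K := by field_simp
      _ ≤ _ := mul_le_mul_of_nonneg_left (hK (u t)) (pow_pos ht0 _).le
  have hx0 : 0 ≤ x := hr0.trans hx.1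
  have hY0 : 0 ≤ |deriv u x| ^ p / (p / (p - 1)) :=
    div_nonneg (by positivity) (div_nonneg (by linarith) (by linarith))
  have hE0 : 0 ≤ energy p f u x := add_nonneg hY0 (Fhat_nonneg hc heq (u x))
  have hB0 : 0 ≤ |u x| ^ p / p + |deriv u x| ^ p / (p / (p - 1)) :=
    add_nonneg (div_nonneg (by positivity) (by linarith)) hY0
  have hupper : pohozaev p N f u x ≤ R2 ^ N * energy p f u x +
      nOverPstar p N * R2 ^ (N - 1) *
        (|u x| ^ p / p + |deriv u x| ^ p / (p / (p - 1))) := by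
    refine add_le_add (mul_le_mul_of_nonneg_right (pow_le_pow_left₀ hx0 hx.2 N) hE0) ?_
    rw [mul_assoc, mul_left_comm (u x)]
    refine mul_le_mul_of_nonneg_left ?_ ha
    exact (mul_le_mul_of_nonneg_left (mul_phip_le hp (u x) (deriv u x)) (by positivity)).trans
      (mul_le_mul_of_nonneg_right (pow_le_pow_left₀ hx0 hx.2 _) hB0)
  have h0N : (0 : ℝ) ^ N = 0 := zero_pow (by omega)
  have hKx : K / N * (x ^ N - r ^ N) ≤ K / N * R2 ^ N := by
    refine mul_le_mul_of_nonneg_left ?_ (by positivity)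
    linarith [pow_le_pow_left₀ hx0 hx.2 N, pow_nonneg hr0 N]
  rw [hP0, h0N] at hstep1
  linarith
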